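/- Let S_{η,d} = ⋃_{i=0}^{d/2} B_{⌈lg η⌉, i} be the set of bounded adaptive multi-counters with at most d/2 components and total bit-length at most ⌈lg η⌉. If d = 2·δ·lg η for a constant δ > 0 (with lg η and δ·lg η integers), then |S_{η,d}| = Θ( η^{lg(δ+1) + lg(e_δ) + 1} / √(log η) ), where e_δ = (1 + 1/δ)^δ. -/

import Mathlib

/-- `SCounters g D = ⋃_{i=0}^{D} B_{g,i}`: bounded adaptive multi-counters with at most
`D` components (tuples of finite binary strings) and total bit-length at most `g`. -/
def SCounters (g D : ℕ) : Set (List (List Bool)) :=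
  {t | t.length ≤ D ∧ (t.map List.length).sum ≤ g}

/-!
A tuple of words is determined by its vector of word lengths together with the concatenation of
its words, so there are `|α| ^ g * multichoose n g` tuples of `n` words of total length `g`.
Keeping only the tuples with `n = D` and total length exactly `g` bounds `|SCounters g D|` below by
`2 ^ g * multichoose D g`; summing over all admissible sizes and lengths, with `2 ^ h ≤ 2 ^ g`,
bounds it above by `2 ^ g * choose (g + D + 1) (g + 1)`. When `D = δ * g` both binomial
coefficients are within constant factors of `choose (g + D) g`, which Stirling's formula
identifies, again up to constants, with `exp ((g + D) * H (g / (g + D))) / √g`, where `H` is the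
binary entropy; finally `(1 + δ) * H (1 / (1 + δ)) = log (δ + 1) + δ * log (1 + 1 / δ)`.
-/

section WordTuples

/-- Lists of `n` natural numbers with sum `g`: the possible vectors of word lengths of an `n`-tuple
of words of total length `g`. Zero parts are allowed, unlike in Mathlib's `Composition`. -/
def weakCompositions (n g : ℕ) : Set (List ℕ) :=
  {c | c.length = n ∧ c.sum = g}

/-- The `n`-tuples of words over the alphabet `α` of total length exactly `g`, encoded as lists of
lists. For `α = Bool` these are the layers into which `SCounters` decomposes. -/
def wordTuples (α : Type*) (n g : ℕ) : Set (List (List α)) :=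
  {t | t.length = n ∧ (t.map List.length).sum = g}

theorem weakCompositions_eq_image_ofFn (n g : ℕ) :
    weakCompositions n g = List.ofFn '' {P : Fin n → ℕ | ∑ i, P i = g} := by
  ext c
  constructor
  · rintro ⟨rfl, rfl⟩
    exact ⟨c.get, by simp [← List.sum_ofFn], List.ofFn_get c⟩
  · rintro ⟨P, hP, rfl⟩
    exact ⟨List.length_ofFn, by rwa [List.sum_ofFn]⟩

theorem finite_weakCompositions (n g : ℕ) : (weakCompositions n g).Finite := by
  rw [weakCompositions_eq_image_ofFn]
  have : Finite {P : Fin n → ℕ | ∑ i, P i = g} :=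
    Finite.of_equiv _ (Sym.equivNatSumOfFintype (Fin n) g)
  exact Set.toFinite _

theorem ncard_weakCompositions (n g : ℕ) : (weakCompositions n g).ncard = n.multichoose g := by
  rw [weakCompositions_eq_image_ofFn, Set.ncard_image_of_injective _ List.ofFn_injective,
    ← Nat.card_coe_set_eq]
  exact (Nat.card_congr (Sym.equivNatSumOfFintype (Fin n) g).symm).trans
    (by rw [Nat.card_eq_fintype_card, Sym.card_sym_fin_eq_multichoose])

variable (α : Type*)

theorem bijOn_lengths_flatten (n g : ℕ) :
    Set.BijOn (fun t : List (List α) => (t.map List.length, t.flatten)) (wordTuples α n g)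
      (weakCompositions n g ×ˢ {w | w.length = g}) := by
  refine ⟨?_, ?_, ?_⟩
  · rintro t ⟨hn, hg⟩
    exact ⟨⟨by simpa using hn, hg⟩, by simpa using hg⟩
  · intro t _ t' _ h
    obtain ⟨hlengths, hflatten⟩ := Prod.mk.inj h
    exact List.eq_iff_flatten_eq.2 ⟨hflatten, hlengths⟩
  · rintro ⟨c, w⟩ ⟨⟨hn, hg⟩, hw : w.length = g⟩
    have hlengths := w.map_splitLengths_length c (hg.trans hw.symm).le
    have hflatten := w.flatten_splitLengths c (hw.trans hg.symm).le
    exact ⟨c.splitLengths w, ⟨by simpa using hn, by rw [hlengths, hg]⟩,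
      Prod.ext hlengths hflatten⟩

theorem finite_wordTuples [Finite α] (n g : ℕ) : (wordTuples α n g).Finite :=
  (bijOn_lengths_flatten α n g).finite_iff_finite.2 <|
    (finite_weakCompositions n g).prod (List.finite_length_eq α g)

theorem ncard_wordTuples [Finite α] (n g : ℕ) :
    (wordTuples α n g).ncard = Nat.card α ^ g * n.multichoose g := by
  have words : {w : List α | w.length = g}.ncard = Nat.card α ^ g := by
    have := Fintype.ofFinite α
    rw [← Nat.card_coe_set_eq, Nat.card_eq_fintype_card (α := α), ← card_vector g,
      ← Nat.card_eq_fintype_card]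
    rfl
  rw [(bijOn_lengths_flatten α n g).ncard_eq, Set.ncard_prod, ncard_weakCompositions, words,
    mul_comm]

end WordTuples

section Counting

variable (g D : ℕ)

theorem SCounters.eq_biUnion_wordTuples :
    SCounters g D =
      ⋃ n ∈ Finset.range (D + 1), ⋃ h ∈ Finset.range (g + 1), wordTuples Bool n h := by
  ext t
  simp [SCounters, wordTuples]

theorem SCounters.finite : (SCounters g D).Finite := by
  rw [SCounters.eq_biUnion_wordTuples]
  exact (Finset.finite_toSet _).biUnion fun n _ =>
    (Finset.finite_toSet _).biUnion fun h _ => finite_wordTuples Bool n h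

theorem SCounters.two_pow_mul_multichoose_le_ncard :
    2 ^ g * D.multichoose g ≤ (SCounters g D).ncard :=
  calc 2 ^ g * D.multichoose g = (wordTuples Bool D g).ncard := by simp [ncard_wordTuples]
    _ ≤ (SCounters g D).ncard :=
      Set.ncard_le_ncard (fun _ ht => ⟨ht.1.le, ht.2.le⟩) (SCounters.finite g D)

theorem SCounters.ncard_le_two_pow_mul_choose :
    (SCounters g D).ncard ≤ 2 ^ g * (g + D + 1).choose (g + 1) :=
  calc (SCounters g D).ncard
      ≤ ∑ n ∈ Finset.range (D + 1), ∑ h ∈ Finset.range (g + 1), (wordTuples Bool n h).ncard := by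
        rw [SCounters.eq_biUnion_wordTuples]
        exact (Finset.set_ncard_biUnion_le _ _).trans
          (Finset.sum_le_sum fun n _ => Finset.set_ncard_biUnion_le _ _)
    _ ≤ ∑ n ∈ Finset.range (D + 1), ∑ h ∈ Finset.range (g + 1), 2 ^ g * n.multichoose h := by
        gcongr with n _ h hh
        rw [ncard_wordTuples, Nat.card_eq_fintype_card, Fintype.card_bool]
        gcongr
        · norm_num
        · exact Nat.lt_succ_iff.1 (Finset.mem_range.1 hh)
    _ = 2 ^ g * ∑ n ∈ Finset.range (D + 1), (g + 1).multichoose n := by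
        simp only [← Finset.mul_sum, Nat.sum_range_multichoose, Nat.multichoose_eq (g + 1),
          Nat.add_right_comm, Nat.add_sub_cancel]
    _ = 2 ^ g * (g + D + 1).choose (g + 1) := by
        rw [Nat.sum_range_multichoose, Nat.add_left_comm, ← Nat.add_assoc]

end Counting

theorem add_mul_multichoose (n k : ℕ) :
    (n + k) * n.multichoose k = n * (n + k).choose k := by
  cases n with
  | zero => cases k <;> simp
  | succ n =>
    have h := Nat.choose_mul_succ_eq (n + k) k
    rw [show n + k + 1 - k = n + 1 by omega] at h
    rw [Nat.multichoose_eq, show n + 1 + k - 1 = n + k by omega,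
      show n + 1 + k = n + k + 1 by omega, mul_comm, h, mul_comm]

theorem SCounters.ncard_bounds {δ : ℝ} (hδ : 0 < δ) {L D : ℕ} (hL : L ≠ 0)
    (hD : (D : ℝ) = δ * L) :
    δ / (δ + 1) * (2 ^ L * (L + D).choose L) ≤ (SCounters L D).ncard ∧
      (SCounters L D).ncard ≤ (δ + 1) * (2 ^ L * (L + D).choose L) := by
  have hL' : (0 : ℝ) < L := by positivity
  constructor
  · have hratio : (D.multichoose L : ℝ) = δ / (δ + 1) * (L + D).choose L := by
      have h : ((L : ℝ) + D) * D.multichoose L = D * (L + D).choose L := by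
        exact_mod_cast Nat.add_comm D L ▸ add_mul_multichoose D L
      rw [add_comm (L : ℝ), hD, ← add_one_mul, mul_right_comm, mul_right_comm δ] at h
      rw [div_mul_eq_mul_div, eq_div_iff (by positivity), mul_comm]
      exact mul_right_cancel₀ hL'.ne' h
    calc δ / (δ + 1) * (2 ^ L * (L + D).choose L) = 2 ^ L * D.multichoose L := by
          rw [hratio]; ring
      _ ≤ (SCounters L D).ncard := by exact_mod_cast two_pow_mul_multichoose_le_ncard L D
  · have hratio : ((L + D + 1).choose (L + 1) : ℝ) ≤ (δ + 1) * (L + D).choose L := by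
      have h : ((L : ℝ) + D + 1) * (L + D).choose L = (L + D + 1).choose (L + 1) * (L + 1) := by
        exact_mod_cast Nat.add_one_mul_choose_eq (L + D) L
      have hlin : (L : ℝ) + D + 1 ≤ (δ + 1) * (L + 1) := by rw [hD]; linarith
      refine le_of_mul_le_mul_right (a := (L : ℝ) + 1) ?_ (by positivity)
      rw [← h, mul_right_comm]
      gcongr
    calc ((SCounters L D).ncard : ℝ) ≤ 2 ^ L * (L + D + 1).choose (L + 1) := by
          exact_mod_cast ncard_le_two_pow_mul_choose L D
      _ ≤ 2 ^ L * ((δ + 1) * (L + D).choose L) := by gcongr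
      _ = (δ + 1) * (2 ^ L * (L + D).choose L) := by ring

section Entropy

open Real Stirling

theorem add_mul_binEntropy_div_add {x y : ℝ} (h : x + y ≠ 0) :
    (x + y) * binEntropy (x / (x + y)) = x * log ((x + y) / x) + y * log ((x + y) / y) := by
  have hcompl : 1 - x / (x + y) = y / (x + y) := by rw [one_sub_div h, add_sub_cancel_left]
  rw [binEntropy, hcompl, inv_div, inv_div]
  field_simp

/-- The leading term `2 ^ (k H(p)) / √(2π p (1 - p) k)` of the binomial coefficient
`choose k (p k)`, parametrized by `a = p k` and `b = (1 - p) k`. The entropy `H` is measured in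
nats here, so that the base `2` becomes `e`. -/
noncomputable def entropyApprox (a b : ℝ) : ℝ :=
  √((a + b) / (2 * π * a * b)) * exp ((a + b) * binEntropy (a / (a + b)))

theorem entropyApprox_nonneg (a b : ℝ) : 0 ≤ entropyApprox a b := by
  unfold entropyApprox
  positivity

theorem stirlingSeq_le_exp_one_div_sqrt_two (n : ℕ) : stirlingSeq n ≤ exp 1 / √2 := by
  cases n with
  | zero => rw [stirlingSeq_zero]; positivity
  | succ n => exact stirlingSeq_one ▸ stirlingSeq'_antitone n.zero_le

theorem stirlingSeq_pos {n : ℕ} (hn : n ≠ 0) : 0 < stirlingSeq n :=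
  (sqrt_pos.2 pi_pos).trans_le (sqrt_pi_le_stirlingSeq hn)

theorem factorial_eq_stirlingSeq_mul {n : ℕ} (hn : n ≠ 0) :
    (n.factorial : ℝ) = stirlingSeq n * (√(2 * n) * (n / exp 1) ^ n) := by
  rw [stirlingSeq, div_mul_cancel₀ _ (by positivity)]

theorem choose_eq_stirlingSeq_mul_entropyApprox {a b : ℕ} (ha : a ≠ 0) (hb : b ≠ 0) :
    ((a + b).choose a : ℝ) =
      √π * stirlingSeq (a + b) / (stirlingSeq a * stirlingSeq b) * entropyApprox a b := by
  have hexp : exp ((a + b) * binEntropy (a / (a + b))) =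
      ((a + b) / a : ℝ) ^ a * ((a + b) / b : ℝ) ^ b := by
    rw [add_mul_binEntropy_div_add (by positivity), exp_add, exp_nat_mul, exp_nat_mul,
      exp_log (by positivity), exp_log (by positivity)]
  have hsqrt : √π * √((a + b) / (2 * π * a * b)) = √(2 * (a + b)) / (√(2 * a) * √(2 * b)) := by
    rw [← sqrt_mul (by positivity), ← sqrt_mul (by positivity), ← sqrt_div (by positivity)]
    congr 1
    field_simp
  rw [Nat.cast_add_choose, factorial_eq_stirlingSeq_mul ha, factorial_eq_stirlingSeq_mul hb,
    factorial_eq_stirlingSeq_mul (by positivity), entropyApprox, hexp, Nat.cast_add]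
  calc _ = stirlingSeq (a + b) / (stirlingSeq a * stirlingSeq b) *
        (√(2 * (a + b)) / (√(2 * a) * √(2 * b))) *
        (((a + b) / a : ℝ) ^ a * ((a + b) / b : ℝ) ^ b) := by
        simp only [div_pow, pow_add]
        field_simp
    _ = _ := by
        rw [← hsqrt]
        ring

theorem mul_entropyApprox_le_choose {a b : ℕ} (ha : a ≠ 0) (hb : b ≠ 0) :
    2 * π / exp 1 ^ 2 * entropyApprox a b ≤ (a + b).choose a := by
  rw [choose_eq_stirlingSeq_mul_entropyApprox ha hb]
  refine mul_le_mul_of_nonneg_right ?_ (entropyApprox_nonneg a b)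
  have hab : a + b ≠ 0 := by positivity
  calc 2 * π / exp 1 ^ 2 = √π * √π / (exp 1 / √2 * (exp 1 / √2)) := by
        rw [← sq, ← sq, div_pow, sq_sqrt pi_pos.le, sq_sqrt zero_le_two]
        field_simp
    _ ≤ √π * stirlingSeq (a + b) / (stirlingSeq a * stirlingSeq b) := by
        have := stirlingSeq_pos ha
        have := stirlingSeq_pos hb
        have := stirlingSeq_pos hab
        gcongr
        · exact sqrt_pi_le_stirlingSeq hab
        · exact stirlingSeq_le_exp_one_div_sqrt_two a
        · exact stirlingSeq_le_exp_one_div_sqrt_two b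

theorem choose_le_mul_entropyApprox {a b : ℕ} (ha : a ≠ 0) (hb : b ≠ 0) :
    (a + b).choose a ≤ exp 1 / √(2 * π) * entropyApprox a b := by
  rw [choose_eq_stirlingSeq_mul_entropyApprox ha hb]
  refine mul_le_mul_of_nonneg_right ?_ (entropyApprox_nonneg a b)
  calc √π * stirlingSeq (a + b) / (stirlingSeq a * stirlingSeq b)
      ≤ √π * (exp 1 / √2) / (√π * √π) := by
        have := stirlingSeq_pos ha
        gcongr
        · exact stirlingSeq_le_exp_one_div_sqrt_two (a + b)
        · exact sqrt_pi_le_stirlingSeq ha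
        · exact sqrt_pi_le_stirlingSeq hb
    _ = exp 1 / √(2 * π) := by
        rw [sqrt_mul zero_le_two]
        field_simp

theorem two_pow_mul_entropyApprox {δ : ℝ} (hδ : 0 < δ) {L : ℕ} (hL : L ≠ 0) :
    2 ^ L * entropyApprox L (δ * L) =
      √((δ + 1) * log 2 / (2 * π * δ)) *
        (((2 : ℝ) ^ L) ^ (logb 2 (δ + 1) + δ * logb 2 (1 + 1 / δ) + 1) / √(log (2 ^ L))) := by
  have : (0 : ℝ) < L := by positivity
  have : 0 < log 2 := log_pos one_lt_two
  have hentropy : (L + δ * L) * binEntropy (L / (L + δ * L)) =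
      L * (log (δ + 1) + δ * log (1 + 1 / δ)) := by
    rw [add_mul_binEntropy_div_add (by positivity),
      show (L + δ * L) / L = δ + 1 by field_simp; ring,
      show (L + δ * L) / (δ * L) = 1 + 1 / δ by field_simp; ring]
    ring
  have hpow : ((2 : ℝ) ^ L) ^ (logb 2 (δ + 1) + δ * logb 2 (1 + 1 / δ) + 1) =
      2 ^ L * exp (L * (log (δ + 1) + δ * log (1 + 1 / δ))) := by
    rw [rpow_add_one (by positivity), mul_comm, rpow_def_of_pos (by positivity), log_pow, logb,
      logb]
    congr 2
    field_simp
  have hsqrt : √((L + δ * L) / (2 * π * L * (δ * L))) =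
      √((δ + 1) * log 2 / (2 * π * δ)) / √(log (2 ^ L)) := by
    rw [← sqrt_div (by positivity), log_pow]
    congr 1
    field_simp
    ring
  rw [entropyApprox, hentropy, hpow, hsqrt]
  ring

end Entropy

/-- If `d = 2·δ·lg η` for a constant `δ > 0` (with `lg η = L` and `δ·lg η = D = d/2`
integers, i.e. `η = 2^L`), then
`|S_{η,d}| = Θ( η^{lg(δ+1) + lg(e_δ) + 1} / √(log η) )`, where
`e_δ = (1 + 1/δ)^δ`, so that `lg(e_δ) = δ·lg(1 + 1/δ)`. -/
theorem size_S_theta (δ : ℝ) (hδ : 0 < δ) :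
    ∃ c₁ c₂ : ℝ, 0 < c₁ ∧ 0 < c₂ ∧ ∃ N : ℕ, ∀ η L D : ℕ, N ≤ η →
      η = 2 ^ L → (D : ℝ) = δ * L →
      c₁ * (η : ℝ) ^ (Real.logb 2 (δ + 1) + δ * Real.logb 2 (1 + 1 / δ) + 1)
          / Real.sqrt (Real.log η) ≤ ((SCounters L D).ncard : ℝ) ∧
      ((SCounters L D).ncard : ℝ) ≤
        c₂ * (η : ℝ) ^ (Real.logb 2 (δ + 1) + δ * Real.logb 2 (1 + 1 / δ) + 1)
          / Real.sqrt (Real.log η) := by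
  set K := √((δ + 1) * Real.log 2 / (2 * Real.pi * δ))
  have : 0 < K := Real.sqrt_pos.2 <| by have := Real.log_pos one_lt_two; positivity
  refine ⟨δ / (δ + 1) * (2 * Real.pi / Real.exp 1 ^ 2) * K,
    (δ + 1) * (Real.exp 1 / √(2 * Real.pi)) * K, by positivity, by positivity, 2, ?_⟩
  rintro _ L D hη rfl hD
  have hL : L ≠ 0 := by rintro rfl; norm_num at hη
  have hD₀ : D ≠ 0 := Nat.cast_ne_zero.1 (hD ▸ by positivity : (D : ℝ) ≠ 0)
  obtain ⟨hlower, hupper⟩ := SCounters.ncard_bounds hδ hL hD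
  have hentropy := two_pow_mul_entropyApprox hδ hL
  rw [← hD] at hentropy
  rw [Nat.cast_pow, Nat.cast_ofNat]
  constructor
  · calc _ = δ / (δ + 1) * (2 ^ L * (2 * Real.pi / Real.exp 1 ^ 2 * entropyApprox L D)) := by
          rw [mul_left_comm (2 ^ L), hentropy]; ring
      _ ≤ δ / (δ + 1) * (2 ^ L * (L + D).choose L) := by
          gcongr; exact mul_entropyApprox_le_choose hL hD₀
      _ ≤ _ := hlower
  · calc _ ≤ (δ + 1) * (2 ^ L * ((L + D).choose L : ℝ)) := hupper
      _ ≤ (δ + 1) * (2 ^ L * (Real.exp 1 / √(2 * Real.pi) * entropyApprox L D)) := by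
          gcongr; exact choose_le_mul_entropyApprox hL hD₀
      _ = _ := by rw [mul_left_comm (2 ^ L), hentropy]; ring
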